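/- With p₀(n) := 205n² − 160n + 32 and p₂(n) := 215n² − 180n + 36, the series identity ∑_{n≥1} (−1/2^10)^n · ((1)_n)^5 / ((1/2)_n)^5 · [ −p₂(n)/n^8 + (H_n^{(3)} + H_{2n}^{(3)}) p₀(n)/n^5 ] = −2 ζ(3)² holds, where ζ is the Riemann zeta function. -/

import Mathlib

/-- The rising factorial (Pochhammer symbol) `(a)ₙ = a(a+1)⋯(a+n-1)`. -/
noncomputable def risingFactorial (a : ℝ) (n : ℕ) : ℝ :=
  ∏ i ∈ Finset.range n, (a + i)

/-- The generalized harmonic number `H_n^{(s)} = ∑_{k=1}^n 1/k^s`. -/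
noncomputable def genHarmonic (s n : ℕ) : ℝ :=
  ∑ k ∈ Finset.range n, 1 / ((k : ℝ) + 1) ^ s

/-!
For a Wilf–Zeilberger pair `(F, G)` the discrete one-form `F δk + G δn` is closed, so it has the
same sum along the axis `n = 0` as along the staircase `(n, n) → (n + 1, n) → (n + 1, n + 1)`. For
the pair used here the axis sum telescopes, since `F(0, k) = 2 (H_{k+1}² - H_k²)` with
`H = H^{(3)}`, and gives `2 ζ(3)²`; the steps of the staircase are the negatives of the terms of
the series.

The pair is the derivative at `x = 0` of a family of pairs depending on a parameter `x`, with kernel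
`K = (-1)^n ∏_{i ≤ k} (i⁴ + x i) ∏_{i ≤ n} (i⁶ - x²) / ((2n)! ∏_{i ≤ n+k+1} (i⁴ - x i))` and
members `K (n + 2k + 2)` and
`K ((n + 1) ((2n + k + 2)² + (n + k + 1)²) + x) / (2 (n + 1) (2n + 1))`.
-/

open Filter Topology Finset
open scoped Nat

/-- A Wilf–Zeilberger pair: the discrete one-form `F(n, k) δk + G(n, k) δn` is closed. -/
def IsWZPair {E : Type*} [AddCommGroup E] (F G : ℕ → ℕ → E) : Prop :=
  ∀ n k, F (n + 1) k - F n k = G n (k + 1) - G n k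

namespace IsWZPair

section Tails

variable {E : Type*} [AddCommGroup E] [TopologicalSpace E] [IsTopologicalAddGroup E] [T2Space E]
  {F G : ℕ → ℕ → E} {n : ℕ}

lemma tsum_tail_succ_sub_tsum_tail (h : IsWZPair F G) (hF : Summable (F n))
    (hF' : Summable (F (n + 1))) (hG : Tendsto (G n) atTop (𝓝 0)) (m : ℕ) :
    ∑' k, F (n + 1) (k + m) - ∑' k, F n (k + m) = -G n m := by
  have htelescope (K : ℕ) : ∑ k ∈ range K, (F (n + 1) (k + m) - F n (k + m)) =
      G n (K + m) - G n m := by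
    simp_rw [h n, add_right_comm _ m 1]
    simpa only [zero_add] using sum_range_sub (fun k => G n (k + m)) K
  refine tendsto_nhds_unique (((summable_nat_add_iff m).2 hF').hasSum.sub
    ((summable_nat_add_iff m).2 hF).hasSum).tendsto_sum_nat ?_
  simp_rw [htelescope]
  simpa only [zero_sub] using ((tendsto_add_atTop_iff_nat m).2 hG).sub_const (G n m)

lemma tsum_tail_sub_tsum_tail_succ (h : IsWZPair F G) (hF : Summable (F n))
    (hF' : Summable (F (n + 1))) (hG : Tendsto (G n) atTop (𝓝 0)) :
    ∑' k, F n (k + n) - ∑' k, F (n + 1) (k + (n + 1)) = F (n + 1) n + G n n := by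
  have hhead : ∑' k, F (n + 1) (k + n) = F (n + 1) n + ∑' k, F (n + 1) (k + (n + 1)) := by
    rw [((summable_nat_add_iff n).2 hF').tsum_eq_zero_add, zero_add]
    simp_rw [add_right_comm _ 1 n, add_assoc]
  calc ∑' k, F n (k + n) - ∑' k, F (n + 1) (k + (n + 1))
      = ∑' k, F (n + 1) (k + n) - ∑' k, F (n + 1) (k + (n + 1)) -
          (∑' k, F (n + 1) (k + n) - ∑' k, F n (k + n)) := by abel
    _ = F (n + 1) n + G n n := by
        rw [h.tsum_tail_succ_sub_tsum_tail hF hF' hG, hhead, add_sub_cancel_right, sub_neg_eq_add]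

end Tails

theorem hasSum_diagonal {E : Type*} [NormedAddCommGroup E] [CompleteSpace E] {F G : ℕ → ℕ → E}
    (h : IsWZPair F G) {g : ℕ → ℝ} (hg : Summable g)
    (hF : ∀ n k, n ≤ k + 1 → ‖F n k‖ ≤ g k) (hG : ∀ n k, n ≤ k → ‖G n k‖ ≤ g k) :
    HasSum (fun n => F (n + 1) n + G n n) (∑' k, F 0 k) := by
  have hFsum (n : ℕ) : Summable (F n) :=
    hg.of_norm_bounded_eventually_nat <| eventually_atTop.2 ⟨n, fun k hk => hF n k (by omega)⟩
  have hGlim (n : ℕ) : Tendsto (G n) atTop (𝓝 0) :=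
    squeeze_zero_norm' (eventually_atTop.2 ⟨n, hG n⟩) hg.tendsto_atTop_zero
  have hpartial (N : ℕ) :
      ∑ n ∈ range N, (F (n + 1) n + G n n) = ∑' k, F 0 k - ∑' k, F N (k + N) := by
    simp_rw [← h.tsum_tail_sub_tsum_tail_succ (hFsum _) (hFsum _) (hGlim _)]
    exact sum_range_sub' (fun n => ∑' k, F n (k + n)) N
  have htail : Tendsto (fun N => ∑' k, F N (k + N)) atTop (𝓝 0) :=
    squeeze_zero_norm (fun N => tsum_of_norm_bounded ((summable_nat_add_iff N).2 hg).hasSum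
      fun k => hF N (k + N) (by omega)) (tendsto_sum_nat_add g)
  have hsummable : Summable fun n => F (n + 1) n + G n n :=
    (hg.add hg).of_norm_bounded fun n =>
      norm_add_le_of_le (hF (n + 1) n le_rfl) (hG n n le_rfl)
  refine hsummable.hasSum_iff_tendsto_nat.2 ?_
  simp_rw [hpartial]
  simpa only [sub_zero] using htail.const_sub (∑' k, F 0 k)

end IsWZPair

lemma genHarmonic_succ (s n : ℕ) :
    genHarmonic s (n + 1) = genHarmonic s n + 1 / ((n : ℝ) + 1) ^ s :=
  sum_range_succ _ _

lemma genHarmonic_nonneg (s n : ℕ) : 0 ≤ genHarmonic s n :=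
  sum_nonneg fun _ _ => by positivity

lemma genHarmonic_le_two {s : ℕ} (hs : 2 ≤ s) (n : ℕ) : genHarmonic s n ≤ 2 := by
  calc genHarmonic s n ≤ ∑ k ∈ range n, (((k + 1 : ℕ) : ℝ) ^ 2)⁻¹ := by
        refine sum_le_sum fun k _ => ?_
        rw [one_div, Nat.cast_succ]
        gcongr
        simp
    _ = ∑ i ∈ Ioo 0 (n + 1), ((i : ℝ) ^ 2)⁻¹ := by
        rw [range_eq_Ico, sum_Ico_add' (fun i : ℕ => ((i : ℝ) ^ 2)⁻¹)]
        rfl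
    _ ≤ 2 := by simpa using sum_Ioo_inv_sq_le (α := ℝ) 0 (n + 1)

lemma tendsto_genHarmonic {s : ℕ} (hs : 1 < s) :
    Tendsto (fun n => (genHarmonic s n : ℂ)) atTop (𝓝 (riemannZeta s)) := by
  have hsum : HasSum (fun k : ℕ => 1 / ((k : ℂ) + 1) ^ s) (riemannZeta s) := by
    have hsummable : Summable fun k : ℕ => 1 / (k : ℂ) ^ s := by
      simpa using Complex.ofRealCLM.summable (Real.summable_one_div_nat_pow.2 hs)
    have h := (hasSum_nat_add_iff' 1).2 hsummable.hasSum
    rw [← zeta_nat_eq_tsum_of_gt_one hs] at h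
    simpa [(zero_lt_one.trans hs).ne'] using h
  simpa [genHarmonic] using hsum.tendsto_sum_nat

lemma risingFactorial_one (n : ℕ) : risingFactorial 1 n = n ! := by
  simp [risingFactorial, ← prod_range_add_one_eq_factorial, add_comm]

lemma risingFactorial_half (n : ℕ) :
    risingFactorial (1 / 2) n = (2 * n)! / (4 ^ n * n !) := by
  induction n with
  | zero => simp [risingFactorial]
  | succ n ih =>
    have hsucc : risingFactorial (1 / 2) (n + 1) = risingFactorial (1 / 2) n * (1 / 2 + n) :=
      prod_range_succ _ _
    rw [hsucc, ih, mul_add_one 2 n]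
    simp only [Nat.factorial_succ]
    push_cast
    field_simp
    ring

lemma pow_mul_risingFactorial_ratio (n : ℕ) :
    (-1 / 2 ^ 10 : ℝ) ^ n * risingFactorial 1 n ^ 5 / risingFactorial (1 / 2) n ^ 5 =
      (-1) ^ n * (n ! : ℝ) ^ 10 / ((2 * n)! : ℝ) ^ 5 := by
  have hpow : (2 ^ 10 : ℝ) ^ n = (4 ^ n) ^ 5 := by
    rw [pow_right_comm (4 : ℝ) n 5]
    norm_num
  rw [risingFactorial_one, risingFactorial_half, div_pow, hpow]
  field_simp

/-- The hypergeometric kernel common to `wzF` and `wzG`, namely `K` at `x = 0`. -/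
noncomputable def wzKernel (n k : ℕ) : ℝ :=
  (-1) ^ n * (k ! : ℝ) ^ 4 * (n ! : ℝ) ^ 6 / (((n + k + 1)! : ℝ) ^ 4 * ((2 * n)! : ℝ))

/-- The logarithmic derivative of `K` with respect to `x`, at `x = 0`. -/
noncomputable def wzHarmonic (n k : ℕ) : ℝ :=
  genHarmonic 3 k + genHarmonic 3 (n + k + 1)

/-- The first member of the WZ pair, the `x`-derivative of `K (n + 2k + 2)` at `x = 0`. -/
noncomputable def wzF (n k : ℕ) : ℝ :=
  wzKernel n k * (n + 2 * k + 2) * wzHarmonic n k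

/-- The second member of the WZ pair, likewise an `x`-derivative at `x = 0`; the trailing `1` comes
from the term `K x`. -/
noncomputable def wzG (n k : ℕ) : ℝ :=
  wzKernel n k / (2 * (n + 1) * (2 * n + 1)) *
    ((n + 1) * ((2 * n + k + 2) ^ 2 + (n + k + 1) ^ 2) * wzHarmonic n k + 1)

lemma wzKernel_succ_left (n k : ℕ) :
    wzKernel (n + 1) k =
      -wzKernel n k * ((n : ℝ) + 1) ^ 5 / (2 * (2 * n + 1) * ((n : ℝ) + k + 2) ^ 4) := by
  rw [wzKernel, wzKernel, add_right_comm n 1 k, mul_add_one 2 n]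
  simp only [Nat.factorial_succ]
  push_cast
  field_simp
  ring

lemma wzKernel_succ_right (n k : ℕ) :
    wzKernel n (k + 1) = wzKernel n k * ((k : ℝ) + 1) ^ 4 / ((n : ℝ) + k + 2) ^ 4 := by
  rw [wzKernel, wzKernel, ← add_assoc n k 1]
  simp only [Nat.factorial_succ]
  push_cast
  field_simp
  ring

lemma wzHarmonic_succ_left (n k : ℕ) :
    wzHarmonic (n + 1) k = wzHarmonic n k + 1 / ((n : ℝ) + k + 2) ^ 3 := by
  rw [wzHarmonic, wzHarmonic, add_right_comm n 1 k, genHarmonic_succ 3 (n + k + 1)]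
  push_cast
  ring

lemma wzHarmonic_succ_right (n k : ℕ) :
    wzHarmonic n (k + 1) =
      wzHarmonic n k + 1 / ((k : ℝ) + 1) ^ 3 + 1 / ((n : ℝ) + k + 2) ^ 3 := by
  rw [wzHarmonic, wzHarmonic, ← add_assoc n k 1, genHarmonic_succ 3 (n + k + 1),
    genHarmonic_succ 3 k]
  push_cast
  ring

theorem isWZPair_wzF_wzG : IsWZPair wzF wzG := by
  intro n k
  simp only [wzF, wzG, wzKernel_succ_left, wzKernel_succ_right, wzHarmonic_succ_left,
    wzHarmonic_succ_right]
  push_cast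
  field_simp
  ring

lemma abs_wzKernel_le (n k : ℕ) : |wzKernel n k| ≤ 1 / ((k : ℝ) + 1) ^ 4 := by
  have hfact (a b : ℕ) : (a ! * b ! : ℝ) ≤ ((a + b)! : ℝ) := by
    exact_mod_cast Nat.le_of_dvd (Nat.factorial_pos _)
      (Nat.factorial_mul_factorial_dvd_factorial_add a b)
  have hleft : ((k : ℝ) + 1) * k ! * n ! ≤ (n + k + 1)! := by
    simpa [Nat.factorial_succ, mul_comm, add_assoc] using hfact n (k + 1)
  have hright : (n ! : ℝ) ^ 2 ≤ (2 * n)! := by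
    simpa only [sq, two_mul] using hfact n n
  have habs : |wzKernel n k| =
      (k ! : ℝ) ^ 4 * (n ! : ℝ) ^ 6 / (((n + k + 1)! : ℝ) ^ 4 * ((2 * n)! : ℝ)) := by
    simp [wzKernel, abs_div, abs_mul]
  rw [habs, div_le_div_iff₀ (by positivity) (by positivity)]
  calc (k ! : ℝ) ^ 4 * (n ! : ℝ) ^ 6 * ((k : ℝ) + 1) ^ 4
      = (((k : ℝ) + 1) * k ! * n !) ^ 4 * (n ! : ℝ) ^ 2 := by ring
    _ ≤ ((n + k + 1)! : ℝ) ^ 4 * ((2 * n)! : ℝ) := by gcongr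
    _ = 1 * (((n + k + 1)! : ℝ) ^ 4 * ((2 * n)! : ℝ)) := (one_mul _).symm

lemma wzHarmonic_nonneg (n k : ℕ) : 0 ≤ wzHarmonic n k :=
  add_nonneg (genHarmonic_nonneg _ _) (genHarmonic_nonneg _ _)

lemma wzHarmonic_le_four (n k : ℕ) : wzHarmonic n k ≤ 4 := by
  have h₁ := genHarmonic_le_two (s := 3) (by norm_num) k
  have h₂ := genHarmonic_le_two (s := 3) (by norm_num) (n + k + 1)
  rw [wzHarmonic]
  linarith

lemma abs_wzF_le {n k : ℕ} (hnk : n ≤ k + 1) : |wzF n k| ≤ 12 / ((k : ℝ) + 1) ^ 2 := by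
  have hn : (n : ℝ) ≤ k + 1 := by exact_mod_cast hnk
  have hharmonic := wzHarmonic_nonneg n k
  calc |wzF n k| = |wzKernel n k| * (n + 2 * k + 2) * wzHarmonic n k := by
        rw [wzF, abs_mul, abs_mul, abs_of_nonneg hharmonic,
          abs_of_nonneg (by positivity : (0 : ℝ) ≤ n + 2 * k + 2)]
    _ ≤ 1 / ((k : ℝ) + 1) ^ 4 * (3 * (k + 1)) * 4 := by
        gcongr
        · exact abs_wzKernel_le n k
        · linarith
        · exact wzHarmonic_le_four n k
    _ = 12 / ((k : ℝ) + 1) ^ 3 := by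
        field_simp
        norm_num
    _ ≤ 12 / ((k : ℝ) + 1) ^ 2 := by
        gcongr <;> simp

lemma abs_wzG_le {n k : ℕ} (hnk : n ≤ k) : |wzG n k| ≤ 27 / ((k : ℝ) + 1) ^ 2 := by
  have hn : (n : ℝ) ≤ k := by exact_mod_cast hnk
  have hharmonic := wzHarmonic_nonneg n k
  have hden : (0 : ℝ) ≤ 2 * (n + 1) * (2 * n + 1) := by positivity
  have hnum : (0 : ℝ) ≤
      (n + 1) * ((2 * n + k + 2) ^ 2 + (n + k + 1) ^ 2) * wzHarmonic n k + 1 := by positivity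
  have hone : (1 : ℝ) ≤ 2 * (n + 1) * (k + 1) ^ 2 := by
    exact_mod_cast Nat.succ_le_of_lt (by positivity : 0 < 2 * (n + 1) * (k + 1) ^ 2)
  calc |wzG n k| = |wzKernel n k| / (2 * (n + 1) * (2 * n + 1)) *
        ((n + 1) * ((2 * n + k + 2) ^ 2 + (n + k + 1) ^ 2) * wzHarmonic n k + 1) := by
        rw [wzG, abs_mul, abs_div, abs_of_nonneg hden, abs_of_nonneg hnum]
    _ ≤ 1 / ((k : ℝ) + 1) ^ 4 / (2 * (n + 1) * 1) *
        ((n + 1) * ((3 * (k + 1)) ^ 2 + (2 * (k + 1)) ^ 2) * 4 + 2 * (n + 1) * (k + 1) ^ 2) := by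
        gcongr
        · exact abs_wzKernel_le n k
        · linarith
        · linarith
        · linarith
        · exact wzHarmonic_le_four n k
    _ = 27 / ((k : ℝ) + 1) ^ 2 := by
        field_simp
        norm_num

lemma summable_div_succ_sq (c : ℝ) : Summable fun k : ℕ => c / ((k : ℝ) + 1) ^ 2 := by
  have h : Summable fun k : ℕ => 1 / (((k + 1 : ℕ) : ℝ)) ^ 2 :=
    (summable_nat_add_iff 1).2 (Real.summable_one_div_nat_pow.2 one_lt_two)
  simpa [div_eq_mul_inv] using h.mul_left c

lemma wzF_zero_left (k : ℕ) :
    wzF 0 k = 2 * genHarmonic 3 (k + 1) ^ 2 - 2 * genHarmonic 3 k ^ 2 := by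
  simp only [wzF, wzKernel, wzHarmonic, zero_add, genHarmonic_succ, Nat.factorial_succ]
  push_cast
  field_simp
  simp only [Nat.factorial_zero, Nat.cast_one, one_pow, zero_add, one_mul]
  ring

lemma hasSum_wzF_add_wzG_diagonal :
    HasSum (fun n => wzF (n + 1) n + wzG n n) (∑' k, wzF 0 k) := by
  refine isWZPair_wzF_wzG.hasSum_diagonal (summable_div_succ_sq 27) (fun n k hnk => ?_)
    fun n k hnk => abs_wzG_le hnk
  refine (abs_wzF_le hnk).trans ?_
  gcongr
  norm_num

lemma tsum_wzF_zero_left : ((∑' k, wzF 0 k : ℝ) : ℂ) = 2 * riemannZeta 3 ^ 2 := by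
  have hsummable : Summable (wzF 0) :=
    (summable_div_succ_sq 12).of_norm_bounded fun k => abs_wzF_le (Nat.zero_le _)
  have hpartial (K : ℕ) : ∑ k ∈ range K, wzF 0 k = 2 * genHarmonic 3 K ^ 2 := by
    simp_rw [wzF_zero_left]
    rw [sum_range_sub (fun k => 2 * genHarmonic 3 k ^ 2)]
    simp [genHarmonic]
  refine tendsto_nhds_unique ((Complex.continuous_ofReal.tendsto _).comp
    hsummable.hasSum.tendsto_sum_nat) ?_
  simpa [Function.comp_def, hpartial] using
    ((tendsto_genHarmonic (s := 3) (by norm_num)).pow 2).const_mul 2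

lemma wzHarmonic_self (n : ℕ) :
    wzHarmonic n n = genHarmonic 3 (n + 1) + genHarmonic 3 (2 * (n + 1)) -
      1 / ((n : ℝ) + 1) ^ 3 - 1 / (2 * ((n : ℝ) + 1)) ^ 3 := by
  rw [wzHarmonic, mul_add_one 2 n, ← two_mul, genHarmonic_succ 3 n,
    genHarmonic_succ 3 (2 * n + 1)]
  push_cast
  ring

lemma wzKernel_self (n : ℕ) :
    wzKernel n n = -((-1) ^ (n + 1) * ((n + 1)! : ℝ) ^ 10 / ((2 * (n + 1))! : ℝ) ^ 5) *
      (32 * (2 * n + 1) / ((n : ℝ) + 1) ^ 5) := by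
  rw [wzKernel, mul_add_one 2 n, ← two_mul]
  simp only [Nat.factorial_succ]
  push_cast
  field_simp
  ring

lemma series_term_eq_neg_diagonal (n : ℕ) :
    (-1) ^ (n + 1) * ((n + 1)! : ℝ) ^ 10 / ((2 * (n + 1))! : ℝ) ^ 5 *
        (-(215 * ((n : ℝ) + 1) ^ 2 - 180 * ((n : ℝ) + 1) + 36) / ((n : ℝ) + 1) ^ 8 +
          (genHarmonic 3 (n + 1) + genHarmonic 3 (2 * (n + 1))) *
            (205 * ((n : ℝ) + 1) ^ 2 - 160 * ((n : ℝ) + 1) + 32) /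
            ((n : ℝ) + 1) ^ 5) =
      -(wzF (n + 1) n + wzG n n) := by
  rw [wzF, wzG, wzKernel_succ_left, wzHarmonic_succ_left, wzHarmonic_self, wzKernel_self]
  push_cast
  field_simp
  ring

/-- With `p₀(n) = 205n²−160n+32` and `p₂(n) = 215n²−180n+36`:
`∑_{n≥1} (−1/2^10)^n (1)ₙ^5/(1/2)ₙ^5 [ −p₂(n)/n^8 + (H_n^{(3)} + H_{2n}^{(3)})p₀(n)/n^5 ]
  = −2ζ(3)²`. -/
theorem wz_zeta3_sq_series :
    ∑' n : ℕ, ((((-1 / 2 ^ 10 : ℝ) ^ (n + 1) * (risingFactorial 1 (n + 1)) ^ 5 /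
        (risingFactorial (1 / 2) (n + 1)) ^ 5 *
        (-(215 * ((n : ℝ) + 1) ^ 2 - 180 * ((n : ℝ) + 1) + 36) / ((n : ℝ) + 1) ^ 8 +
          (genHarmonic 3 (n + 1) + genHarmonic 3 (2 * (n + 1))) *
            (205 * ((n : ℝ) + 1) ^ 2 - 160 * ((n : ℝ) + 1) + 32) /
            ((n : ℝ) + 1) ^ 5) : ℝ)) : ℂ)
      = -2 * (riemannZeta 3) ^ 2 := by
  simp_rw [pow_mul_risingFactorial_ratio, series_term_eq_neg_diagonal]
  rw [← Complex.ofReal_tsum, tsum_neg, hasSum_wzF_add_wzG_diagonal.tsum_eq, Complex.ofReal_neg,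
    tsum_wzF_zero_left]
  ring
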